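/- Suppose the pair (A,B) is controllable (the controllability matrix [B, AB, …, A^{n-1}B] has rank n) and A is nonsingular. Then for every α ∈ [0,T], the set R_α equals the sublevel set {ξ ∈ R : V(ξ) ≤ α} of the value function. -/

import Mathlib

open MeasureTheory Set

noncomputable section

/-- Controllability matrix `[B, AB, ..., A^{n-1}B]`. -/
def ctrbMatrix (n : ℕ) (A : Matrix (Fin n) (Fin n) ℝ) (B : Fin n → ℝ) :
    Matrix (Fin n) (Fin n) ℝ :=
  Matrix.of fun i j => (A ^ (j : ℕ)).mulVec B i

/-- `∫₀ᵀ e^{-As} B u(s) ds`. -/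
def stateInt (n : ℕ) (T : ℝ) (A : Matrix (Fin n) (Fin n) ℝ) (B : Fin n → ℝ)
    (u : ℝ → ℝ) : Fin n → ℝ :=
  ∫ s in Icc (0:ℝ) T, u s • (NormedSpace.exp ((-s) • A)).mulVec B

/-- The magnitude constraint `‖u‖_∞ ≤ 1` on `[0,T]`. -/
def MagBdd (T : ℝ) (u : ℝ → ℝ) : Prop := ∀ t ∈ Icc (0:ℝ) T, |u t| ≤ 1

/-- The `L¹` norm of `u` on `[0,T]`. -/
def L1Norm (T : ℝ) (u : ℝ → ℝ) : ℝ := ∫ t in Icc (0:ℝ) T, |u t|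

/-- The `L⁰` norm of `u`: Lebesgue measure of `{t ∈ [0,T] : u t ≠ 0}`. -/
def L0Norm (T : ℝ) (u : ℝ → ℝ) : ℝ := (volume {t ∈ Icc (0:ℝ) T | u t ≠ 0}).toReal

/-- Admissible controls steering `ξ` to `0` at time `T`:
`∫₀ᵀ e^{-As} B u(s) ds = -ξ` and `‖u‖_∞ ≤ 1`. -/
def Admissible (n : ℕ) (T : ℝ) (A : Matrix (Fin n) (Fin n) ℝ) (B : Fin n → ℝ)
    (ξ : Fin n → ℝ) (u : ℝ → ℝ) : Prop :=
  Measurable u ∧ MagBdd T u ∧ stateInt n T A B u = -ξ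

/-- Value function of the maximum hands-off (`L⁰`-optimal) control problem. -/
def V0 (n : ℕ) (T : ℝ) (A : Matrix (Fin n) (Fin n) ℝ) (B : Fin n → ℝ)
    (ξ : Fin n → ℝ) : ℝ :=
  sInf {c | ∃ u, Admissible n T A B ξ u ∧ c = L0Norm T u}

/-- Value function of the `L¹`-optimal control problem. -/
def V1 (n : ℕ) (T : ℝ) (A : Matrix (Fin n) (Fin n) ℝ) (B : Fin n → ℝ)
    (ξ : Fin n → ℝ) : ℝ :=
  sInf {c | ∃ u, Admissible n T A B ξ u ∧ c = L1Norm T u}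

/-- The reachable set `R`. -/
def Reach (n : ℕ) (T : ℝ) (A : Matrix (Fin n) (Fin n) ℝ) (B : Fin n → ℝ) :
    Set (Fin n → ℝ) :=
  {x | ∃ u, Measurable u ∧ MagBdd T u ∧ x = stateInt n T A B u}

/-- The set `R_α`. -/
def ReachL1 (n : ℕ) (T : ℝ) (A : Matrix (Fin n) (Fin n) ℝ) (B : Fin n → ℝ)
    (α : ℝ) : Set (Fin n → ℝ) :=
  {x | ∃ u, Measurable u ∧ MagBdd T u ∧ L1Norm T u ≤ α ∧ x = stateInt n T A B u}

/-- The functional on `L²` represented by `f`, in the weak dual. -/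
def Jw {μ : Measure ℝ} (f : Lp ℝ 2 μ) : WeakDual ℝ (Lp ℝ 2 μ) :=
  StrongDual.toWeakDual (InnerProductSpace.toDual ℝ (Lp ℝ 2 μ) f)

theorem Jw_apply {μ : Measure ℝ} (f h : Lp ℝ 2 μ) : Jw f h = inner ℝ f h := rfl

theorem Jw_surj {μ : Measure ℝ} (φ : WeakDual ℝ (Lp ℝ 2 μ)) : ∃ f, Jw f = φ := by
  refine ⟨(InnerProductSpace.toDual ℝ (Lp ℝ 2 μ)).symm (WeakDual.toStrongDual φ), ?_⟩
  unfold Jw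
  rw [LinearIsometryEquiv.apply_symm_apply]
  rfl

theorem Jw_add {μ : Measure ℝ} (f g : Lp ℝ 2 μ) : Jw (f + g) = Jw f + Jw g := by
  simp [Jw]

theorem Jw_sub {μ : Measure ℝ} (f g : Lp ℝ 2 μ) : Jw (f - g) = Jw f - Jw g := by
  simp [Jw]

theorem Jw_inj {μ : Measure ℝ} {f g : Lp ℝ 2 μ} (h : Jw f = Jw g) : f = g := by
  simpa [Jw] using h

theorem Jw_toLp {μ : Measure ℝ} (f : Lp ℝ 2 μ) (g : ℝ → ℝ) (hg : MemLp g 2 μ) :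
    Jw f (hg.toLp g) = ∫ x, f x * g x ∂μ := by
  rw [Jw_apply, L2.inner_def]
  apply integral_congr_ae
  filter_upwards [hg.coeFn_toLp] with x hx
  rw [hx]
  simp [mul_comm]

theorem Jw_ind {μ : Measure ℝ} [IsFiniteMeasure μ] (f : Lp ℝ 2 μ) {S : Set ℝ}
    (hS : MeasurableSet S) :
    Jw f (indicatorConstLp 2 hS (measure_ne_top μ S) 1) = ∫ x in S, f x ∂μ := by
  rw [Jw_apply, real_inner_comm, L2.inner_indicatorConstLp_one]

/-- Weak-dual box of functionals represented by functions with values in `[a,1]`. -/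
def boxw (μ : Measure ℝ) [IsFiniteMeasure μ] (a : ℝ) : Set (WeakDual ℝ (Lp ℝ 2 μ)) :=
  (WeakDual.toStrongDual ⁻¹' Metric.closedBall 0
    ((measureUnivNNReal μ : ℝ) ^ (2 : ENNReal).toReal⁻¹ * 1)) ∩
  {φ | ∀ S (hS : MeasurableSet S),
    a * μ.real S ≤ φ (indicatorConstLp 2 hS (measure_ne_top μ S) 1) ∧
    φ (indicatorConstLp 2 hS (measure_ne_top μ S) 1) ≤ μ.real S}

theorem boxw_compact (μ : Measure ℝ) [IsFiniteMeasure μ] (a : ℝ) : IsCompact (boxw μ a) := by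
  refine (WeakDual.isCompact_closedBall _ _).inter_right ?_
  simp only [ofPred_forall, ofPred_and]
  refine isClosed_iInter fun S => isClosed_iInter fun hS => ?_
  exact (isClosed_le continuous_const (WeakDual.eval_continuous _)).inter
    (isClosed_le (WeakDual.eval_continuous _) continuous_const)

theorem Lp2_integrable {μ : Measure ℝ} [IsFiniteMeasure μ] (f : Lp ℝ 2 μ) : Integrable f μ :=
  (Lp.memLp f).integrable (by norm_num)

theorem mem_boxw {μ : Measure ℝ} [IsFiniteMeasure μ] {a : ℝ} (ha : -1 ≤ a) (f : Lp ℝ 2 μ) :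
    Jw f ∈ boxw μ a ↔ ∀ᵐ x ∂μ, a ≤ f x ∧ f x ≤ 1 := by
  constructor
  · rintro ⟨-, h⟩
    have h1 : (fun _ => a) ≤ᵐ[μ] f := by
      refine ae_le_of_forall_setIntegral_le (integrable_const _) (Lp2_integrable f) ?_
      intro S hS _
      have := (h S hS).1
      rw [Jw_ind] at this
      simpa [mul_comm] using this
    have h2 : f ≤ᵐ[μ] (fun _ => (1:ℝ)) := by
      refine ae_le_of_forall_setIntegral_le (Lp2_integrable f) (integrable_const _) ?_
      intro S hS _
      have := (h S hS).2
      rw [Jw_ind] at this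
      simpa [mul_comm] using this
    filter_upwards [h1, h2] with x h1 h2 using ⟨h1, h2⟩
  · intro h
    refine ⟨?_, fun S hS => ?_⟩
    · simp only [mem_preimage, Metric.mem_closedBall, dist_zero_right]
      have : ‖WeakDual.toStrongDual (Jw f)‖ = ‖f‖ :=
        (InnerProductSpace.toDual ℝ (Lp ℝ 2 μ)).norm_map f
      rw [this]
      refine Lp.norm_le_of_ae_bound zero_le_one ?_
      filter_upwards [h] with x hx
      rw [Real.norm_eq_abs, abs_le]
      constructor <;> linarith [hx.1, hx.2]
    · rw [Jw_ind]
      constructor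
      · have := setIntegral_mono_ae (s := S) (integrable_const a).integrableOn
          (Lp2_integrable f).integrableOn (h.mono fun x hx => hx.1)
        simpa [mul_comm] using this
      · have := setIntegral_mono_ae (s := S) (Lp2_integrable f).integrableOn
          (integrable_const (1:ℝ)).integrableOn (h.mono fun x hx => hx.2)
        simpa [mul_comm] using this

theorem wd_lc (E : Type*) [NormedAddCommGroup E] [NormedSpace ℝ E] :
    LocallyConvexSpace ℝ (WeakDual ℝ E) :=
  inferInstanceAs (LocallyConvexSpace ℝ (WeakBilin (topDualPairing ℝ E)))

/-- Lyapunov-type theorem. -/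
theorem lyap {ι : Type*} [Fintype ι] (T : ℝ) (g : ι → ℝ → ℝ)
    (hg : ∀ i, MemLp (g i) 2 (volume.restrict (Icc (0:ℝ) T)))
    (w : ℝ → ℝ) (hw : Measurable w) (hw1 : ∀ t ∈ Icc (0:ℝ) T, 0 ≤ w t ∧ w t ≤ 1) :
    ∃ E : Set ℝ, MeasurableSet E ∧ ∀ i,
      ∫ t in Icc (0:ℝ) T, E.indicator (fun _ => (1:ℝ)) t * g i t
        = ∫ t in Icc (0:ℝ) T, w t * g i t := by
  set μ := volume.restrict (Icc (0:ℝ) T) with hμ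
  have hmem : ∀ᵐ t ∂μ, t ∈ Icc (0:ℝ) T := ae_restrict_mem measurableSet_Icc
  have hwL : MemLp w 2 μ := by
    refine MemLp.of_bound hw.aestronglyMeasurable 1 ?_
    filter_upwards [hmem] with t ht
    rw [Real.norm_eq_abs, abs_le]
    constructor <;> linarith [(hw1 t ht).1, (hw1 t ht).2]
  let K : Set (WeakDual ℝ (Lp ℝ 2 μ)) := boxw μ 0 ∩
    {φ | ∀ i, φ ((hg i).toLp (g i)) = ∫ t, w t * g i t ∂μ}
  have hK : IsCompact K := by
    refine (boxw_compact μ 0).inter_right ?_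
    simp only [ofPred_forall]
    exact isClosed_iInter fun i => isClosed_eq (WeakDual.eval_continuous _) continuous_const
  have hne : K.Nonempty := by
    refine ⟨Jw (hwL.toLp w), ?_, fun i => ?_⟩
    · rw [mem_boxw (by norm_num)]
      filter_upwards [hwL.coeFn_toLp, hmem] with t h1 h2
      rw [h1]; exact hw1 t h2
    · rw [Jw_toLp]
      apply integral_congr_ae
      filter_upwards [hwL.coeFn_toLp] with t h1
      rw [h1]
  have := wd_lc (Lp ℝ 2 μ)
  obtain ⟨φ, hφ⟩ := hK.extremePoints_nonempty hne
  obtain ⟨f, rfl⟩ := Jw_surj φ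
  rw [mem_extremePoints] at hφ
  obtain ⟨⟨hfb, hfm⟩, hext⟩ := hφ
  rw [mem_boxw (by norm_num)] at hfb
  have hfm' : ∀ i, ∫ t, f t * g i t ∂μ = ∫ t, w t * g i t ∂μ := by
    intro i
    rw [← hfm i, Jw_toLp]
  -- key: `f (1-f) = 0` a.e.
  have hfs : AEStronglyMeasurable (f : ℝ → ℝ) μ := Lp.aestronglyMeasurable f
  -- bounded multipliers
  have hpb : ∀ p : Polynomial ℝ, ∃ M : ℝ, 0 < M ∧ ∀ t ∈ Icc (0:ℝ) T, |p.eval t| ≤ M := by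
    intro p
    obtain ⟨M, hM⟩ := isCompact_Icc.exists_bound_of_continuousOn (s := Icc (0:ℝ) T)
      p.continuous.continuousOn
    exact ⟨max M 1, by positivity, fun t ht => (hM t ht).trans (le_max_left _ _)⟩
  have hhL : ∀ p : Polynomial ℝ, MemLp (fun t => f t * (1 - f t) * p.eval t) 2 μ := by
    intro p
    obtain ⟨M, hM0, hM⟩ := hpb p
    refine MemLp.of_bound ((hfs.mul (aestronglyMeasurable_const.sub hfs)).mul
      p.continuous.aestronglyMeasurable) M ?_
    filter_upwards [hmem, hfb] with t ht hf
    rw [Real.norm_eq_abs, abs_mul]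
    have h1 : |f t * (1 - f t)| ≤ 1 := by
      rw [abs_le]; constructor <;> nlinarith [hf.1, hf.2]
    calc _ ≤ 1 * M := mul_le_mul h1 (hM t ht) (abs_nonneg _) zero_le_one
      _ = M := one_mul M
  have hint : ∀ (p : Polynomial ℝ) i,
      Integrable (fun t => f t * (1 - f t) * p.eval t * g i t) μ := fun p i =>
    (hhL p).integrable_mul (hg i)
  let L : Polynomial.degreeLT ℝ (Fintype.card ι + 1) →ₗ[ℝ] (ι → ℝ) :=
    { toFun := fun p i => ∫ t, f t * (1 - f t) * (p : Polynomial ℝ).eval t * g i t ∂μ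
      map_add' := by
        intro p q
        funext i
        simp only [Submodule.coe_add, Polynomial.eval_add, Pi.add_apply]
        rw [← integral_add (hint _ i) (hint _ i)]
        congr 1; funext t; ring
      map_smul' := by
        intro c p
        funext i
        simp only [Submodule.coe_smul, Polynomial.eval_smul, Pi.smul_apply, smul_eq_mul,
          RingHom.id_apply]
        rw [← integral_const_mul]
        congr 1; funext t; ring }
  have hfr : Module.finrank ℝ (Polynomial.degreeLT ℝ (Fintype.card ι + 1))
      = Fintype.card ι + 1 := by
    rw [(Polynomial.degreeLTEquiv ℝ (Fintype.card ι + 1)).finrank_eq]; simp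
  have : FiniteDimensional ℝ (Polynomial.degreeLT ℝ (Fintype.card ι + 1)) :=
    Module.finite_of_finrank_pos (by omega)
  have hker : LinearMap.ker L ≠ ⊥ := by
    apply LinearMap.ker_ne_bot_of_finrank_lt
    rw [hfr]; simp
  obtain ⟨⟨p, hp⟩, hpk, hp0⟩ := Submodule.exists_mem_ne_zero_of_ne_bot hker
  have hp0 : p ≠ 0 := fun h => hp0 (by simp [h])
  have hpk : ∀ i, ∫ t, f t * (1 - f t) * p.eval t * g i t ∂μ = 0 := fun i =>
    congrFun (LinearMap.mem_ker.1 hpk) i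
  obtain ⟨M, hM0, hM⟩ := hpb p
  set h : Lp ℝ 2 μ := M⁻¹ • (hhL p).toLp _ with hh
  have hhc : ∀ᵐ t ∂μ, h t = M⁻¹ * (f t * (1 - f t) * p.eval t) := by
    filter_upwards [Lp.coeFn_smul M⁻¹ ((hhL p).toLp _), (hhL p).coeFn_toLp] with t h1 h2
    rw [hh, h1, Pi.smul_apply, h2, smul_eq_mul]
  have hhm : ∀ i, Jw h ((hg i).toLp (g i)) = 0 := by
    intro i
    rw [Jw_toLp]
    have : ∫ t, h t * g i t ∂μ = ∫ t, M⁻¹ * (f t * (1 - f t) * p.eval t * g i t) ∂μ := by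
      apply integral_congr_ae
      filter_upwards [hhc] with t ht
      rw [ht]; ring
    rw [this, integral_const_mul, hpk, mul_zero]
  have hbd : ∀ t ∈ Icc (0:ℝ) T, |M⁻¹ * p.eval t| ≤ 1 := by
    intro t ht
    rw [abs_mul, abs_of_pos (inv_pos.2 hM0), inv_mul_le_iff₀ hM0]
    simpa using hM t ht
  have hplus : Jw (f + h) ∈ K := by
    refine ⟨?_, fun i => ?_⟩
    · rw [mem_boxw (by norm_num)]
      filter_upwards [Lp.coeFn_add f h, hhc, hfb, hmem] with t h1 h2 h3 h4
      rw [h1, Pi.add_apply, h2]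
      obtain ⟨h5, h6⟩ := abs_le.1 (hbd t h4)
      set q := M⁻¹ * p.eval t
      have e : M⁻¹ * (f t * (1 - f t) * p.eval t) = f t * (1 - f t) * q := by simp only [q]; ring
      rw [e]
      have a1 : 0 ≤ f t * (1 - f t) := mul_nonneg h3.1 (by linarith [h3.2])
      constructor <;> nlinarith [h3.1, h3.2, sq_nonneg (f t), sq_nonneg (1 - f t)]
    · rw [Jw_add, ← hfm i]
      change Jw f _ + Jw h _ = _
      rw [hhm, add_zero]
  have hminus : Jw (f - h) ∈ K := by
    refine ⟨?_, fun i => ?_⟩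
    · rw [mem_boxw (by norm_num)]
      filter_upwards [Lp.coeFn_sub f h, hhc, hfb, hmem] with t h1 h2 h3 h4
      rw [h1, Pi.sub_apply, h2]
      obtain ⟨h5, h6⟩ := abs_le.1 (hbd t h4)
      set q := M⁻¹ * p.eval t
      have e : M⁻¹ * (f t * (1 - f t) * p.eval t) = f t * (1 - f t) * q := by simp only [q]; ring
      rw [e]
      have a1 : 0 ≤ f t * (1 - f t) := mul_nonneg h3.1 (by linarith [h3.2])
      constructor <;> nlinarith [h3.1, h3.2, sq_nonneg (f t), sq_nonneg (1 - f t)]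
    · rw [Jw_sub, ← hfm i]
      change Jw f _ - Jw h _ = _
      rw [hhm, sub_zero]
  have hseg : Jw f ∈ openSegment ℝ (Jw (f + h)) (Jw (f - h)) := by
    refine ⟨1/2, 1/2, by norm_num, by norm_num, by norm_num, ?_⟩
    rw [Jw_add, Jw_sub]
    module
  have hh0 : h = 0 := by
    have := Jw_inj (hext _ hplus _ hminus hseg).1
    simpa using this
  have hroot : ∀ᵐ t ∂μ, p.eval t ≠ 0 := by
    have hfin : {t | p.eval t = 0}.Finite := by
      refine (p.roots.toFinset.finite_toSet).subset fun t ht => ?_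
      simpa [hp0] using ht
    have : μ {t | p.eval t = 0} = 0 := hfin.measure_zero μ
    rw [ae_iff]; simpa using this
  have hf01 : ∀ᵐ t ∂μ, f t = 0 ∨ f t = 1 := by
    have hz : ∀ᵐ t ∂μ, h t = 0 := by
      rw [hh0]; exact Lp.coeFn_zero ℝ 2 μ
    filter_upwards [hhc, hroot, hz] with t h1 h2 h3
    rw [h3] at h1
    have : f t * (1 - f t) = 0 := by
      by_contra hc
      exact (mul_ne_zero (inv_pos.2 hM0).ne' (mul_ne_zero hc h2)) h1.symm
    rcases mul_eq_zero.1 this with h | h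
    · exact Or.inl h
    · exact Or.inr (by linarith)
  refine ⟨hfs.mk f ⁻¹' {1}, hfs.stronglyMeasurable_mk.measurable (measurableSet_singleton _), ?_⟩
  intro i
  rw [← hfm' i]
  apply integral_congr_ae
  filter_upwards [hfs.ae_eq_mk, hf01] with t h1 h2
  congr 1
  rcases h2 with h2 | h2
  · rw [indicator_of_notMem, h2]
    simp [← h1, h2]
  · rw [indicator_of_mem, h2]
    simp [← h1, h2]

theorem l1_closed {ι : Type*} [Fintype ι] (T : ℝ) (g : ι → ℝ → ℝ)
    (hg : ∀ i, MemLp (g i) 2 (volume.restrict (Icc (0:ℝ) T))) (x : ι → ℝ) (α : ℝ)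
    (H : ∀ ε > 0, ∃ u : ℝ → ℝ, Measurable u ∧ MagBdd T u ∧ L1Norm T u ≤ α + ε ∧
      ∀ i, ∫ t in Icc (0:ℝ) T, u t * g i t = x i) :
    ∃ u : ℝ → ℝ, Measurable u ∧ MagBdd T u ∧ L1Norm T u ≤ α ∧
      ∀ i, ∫ t in Icc (0:ℝ) T, u t * g i t = x i := by
  unfold L1Norm at *
  set μ := volume.restrict (Icc (0:ℝ) T) with hμ
  have hmem : ∀ᵐ t ∂μ, t ∈ Icc (0:ℝ) T := ae_restrict_mem measurableSet_Icc
  let M : Set (WeakDual ℝ (Lp ℝ 2 μ)) := {φ | ∀ i, φ ((hg i).toLp (g i)) = x i}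
  let N : ℕ → Set (WeakDual ℝ (Lp ℝ 2 μ)) := fun k => {φ | ∀ S (hS : MeasurableSet S),
    φ (indicatorConstLp 2 hS (measure_ne_top μ S) 1)
      - φ (indicatorConstLp 2 hS.compl (measure_ne_top μ Sᶜ) 1) ≤ α + 1 / ((k:ℝ) + 1)}
  have hM : IsClosed M := by
    simp only [M, ofPred_forall]
    exact isClosed_iInter fun i => isClosed_eq (WeakDual.eval_continuous _) continuous_const
  have hN : ∀ k, IsClosed (N k) := by
    intro k
    simp only [N, ofPred_forall]
    exact isClosed_iInter fun S => isClosed_iInter fun hS =>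
      isClosed_le ((WeakDual.eval_continuous _).sub (WeakDual.eval_continuous _)) continuous_const
  have hcpt : ∀ k, IsCompact (boxw μ (-1) ∩ M ∩ N k) := fun k =>
    ((boxw_compact μ (-1)).inter_right hM).inter_right (hN k)
  have hne : (⋂ k, boxw μ (-1) ∩ M ∩ N k).Nonempty := by
    refine IsCompact.nonempty_iInter_of_sequence_nonempty_isCompact_isClosed _ ?_ ?_ (hcpt 0)
      (fun k => (hcpt k).isClosed)
    · rintro k φ ⟨h1, h2⟩
      refine ⟨h1, fun S hS => (h2 S hS).trans ?_⟩
      have := one_div_le_one_div_of_le (by positivity : (0:ℝ) < (k:ℝ) + 1)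
        (by push_cast; linarith : (k:ℝ) + 1 ≤ ((k + 1 : ℕ) : ℝ) + 1)
      linarith
    · intro k
      obtain ⟨u, hu, hb, hl, hx⟩ := H (1 / ((k:ℝ) + 1)) (by positivity)
      have huL : MemLp u 2 μ := by
        refine MemLp.of_bound hu.aestronglyMeasurable 1 ?_
        filter_upwards [hmem] with t ht using hb t ht
      refine ⟨Jw (huL.toLp u), ⟨?_, fun i => ?_⟩, fun S hS => ?_⟩
      · rw [mem_boxw le_rfl]
        filter_upwards [huL.coeFn_toLp, hmem] with t h1 h2
        rw [h1]; exact abs_le.1 (hb t h2)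
      · rw [Jw_toLp, ← hx i]
        apply integral_congr_ae
        filter_upwards [huL.coeFn_toLp] with t h1
        rw [h1]
      · rw [Jw_ind, Jw_ind]
        refine le_trans ?_ hl
        have hi := Lp2_integrable (huL.toLp u)
        have hui : Integrable u μ := huL.integrable (by norm_num)
        have e : ∀ S, ∫ t in S, (huL.toLp u) t ∂μ = ∫ t in S, u t ∂μ := fun S =>
          integral_congr_ae (ae_restrict_of_ae huL.coeFn_toLp)
        rw [e, e, ← integral_add_compl hS hui.abs]
        have h1 : ∫ t in S, u t ∂μ ≤ ∫ t in S, |u t| ∂μ :=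
          integral_mono hui.integrableOn hui.abs.integrableOn fun t => le_abs_self _
        have h2 : ∫ t in Sᶜ, -u t ∂μ ≤ ∫ t in Sᶜ, |u t| ∂μ :=
          integral_mono hui.neg.integrableOn hui.abs.integrableOn fun t => neg_le_abs _
        rw [integral_neg] at h2
        linarith
  obtain ⟨φ, hφ⟩ := hne
  rw [mem_iInter] at hφ
  obtain ⟨f, rfl⟩ := Jw_surj φ
  have hfb := (hφ 0).1.1
  have hfM := (hφ 0).1.2
  rw [mem_boxw le_rfl] at hfb
  have hfs : AEStronglyMeasurable (f : ℝ → ℝ) μ := Lp.aestronglyMeasurable f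
  let v : ℝ → ℝ := fun t => max (-1) (min 1 (hfs.mk f t))
  have hvm : Measurable v :=
    measurable_const.max (measurable_const.min hfs.stronglyMeasurable_mk.measurable)
  have hvf : ∀ᵐ t ∂μ, v t = f t := by
    filter_upwards [hfs.ae_eq_mk, hfb] with t h1 h2
    simp only [v, ← h1]
    rw [min_eq_right h2.2, max_eq_right h2.1]
  refine ⟨v, hvm, fun t _ => ?_, ?_, fun i => ?_⟩
  · rw [abs_le]
    exact ⟨le_max_left _ _, max_le (by norm_num) (min_le_left _ _)⟩
  · have hvi : Integrable v μ := (Lp2_integrable f).congr (hvf.mono fun t h => h.symm)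
    have hS : MeasurableSet {t | 0 ≤ v t} := measurableSet_le measurable_const hvm
    have key : ∀ k : ℕ, ∫ t, |v t| ∂μ ≤ α + 1 / ((k:ℝ) + 1) := by
      intro k
      have := (hφ k).2 _ hS
      rw [Jw_ind, Jw_ind] at this
      refine le_trans (le_of_eq ?_) this
      have e : ∀ S, ∫ t in S, f t ∂μ = ∫ t in S, v t ∂μ := fun S =>
        (integral_congr_ae (ae_restrict_of_ae hvf)).symm
      rw [e, e, ← integral_add_compl hS hvi.abs, sub_eq_add_neg, ← integral_neg]
      congr 1
      · refine setIntegral_congr_fun hS fun t ht => abs_of_nonneg ht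
      · refine setIntegral_congr_fun hS.compl fun t ht => ?_
        exact abs_of_neg (not_le.1 ht)
    have hlim : Filter.Tendsto (fun k : ℕ => α + 1 / ((k:ℝ) + 1)) Filter.atTop (nhds (α + 0)) :=
      tendsto_const_nhds.add tendsto_one_div_add_atTop_nhds_zero_nat
    rw [add_zero] at hlim
    exact ge_of_tendsto' hlim key
  · rw [← hfM i, Jw_toLp]
    apply integral_congr_ae
    filter_upwards [hvf] with t h
    rw [h]

section ExpCont
attribute [local instance] Matrix.linftyOpNormedRing Matrix.linftyOpNormedAlgebra

theorem expA_cont (n : ℕ) (A : Matrix (Fin n) (Fin n) ℝ) :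
    Continuous fun s : ℝ => NormedSpace.exp ((-s) • A) := by
  letI : NormedAlgebra ℚ (Matrix (Fin n) (Fin n) ℝ) := NormedAlgebra.restrictScalars ℚ ℝ _
  exact NormedSpace.exp_continuous.comp (continuous_neg.smul continuous_const)

end ExpCont

theorem g_memLp (n : ℕ) (T : ℝ) (A : Matrix (Fin n) (Fin n) ℝ) (B : Fin n → ℝ) (i : Fin n) :
    MemLp (fun s : ℝ => (NormedSpace.exp ((-s) • A)).mulVec B i) 2
      (volume.restrict (Icc (0:ℝ) T)) := by
  have hc : Continuous fun s : ℝ => (NormedSpace.exp ((-s) • A)).mulVec B i :=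
    (continuous_apply i).comp ((expA_cont n A).matrix_mulVec continuous_const)
  obtain ⟨M, hM⟩ := isCompact_Icc.exists_bound_of_continuousOn (s := Icc (0:ℝ) T) hc.continuousOn
  refine MemLp.of_bound hc.aestronglyMeasurable M ?_
  filter_upwards [ae_restrict_mem measurableSet_Icc] with t ht using hM t ht

theorem u_memLp {T : ℝ} {u : ℝ → ℝ} (hu : Measurable u) (hb : MagBdd T u) :
    MemLp u 2 (volume.restrict (Icc (0:ℝ) T)) := by
  refine MemLp.of_bound hu.aestronglyMeasurable 1 ?_
  filter_upwards [ae_restrict_mem measurableSet_Icc] with t ht using hb t ht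

theorem stateInt_apply (n : ℕ) (T : ℝ) (A : Matrix (Fin n) (Fin n) ℝ) (B : Fin n → ℝ)
    {u : ℝ → ℝ} (hu : Measurable u) (hb : MagBdd T u) (i : Fin n) :
    stateInt n T A B u i
      = ∫ s in Icc (0:ℝ) T, u s * (NormedSpace.exp ((-s) • A)).mulVec B i := by
  unfold stateInt
  rw [eval_integral]
  · simp
  · intro j
    exact (u_memLp hu hb).integrable_mul (g_memLp n T A B j)

theorem stateInt_neg (n : ℕ) (T : ℝ) (A : Matrix (Fin n) (Fin n) ℝ) (B : Fin n → ℝ)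
    (u : ℝ → ℝ) : stateInt n T A B (fun t => -u t) = - stateInt n T A B u := by
  unfold stateInt
  rw [← integral_neg]
  simp

theorem MagBdd_neg {T : ℝ} {u : ℝ → ℝ} (hb : MagBdd T u) : MagBdd T (fun t => -u t) :=
  fun t ht => by simpa using hb t ht

theorem L1_le_L0 {T : ℝ} {u : ℝ → ℝ} (hu : Measurable u) (hb : MagBdd T u) :
    L1Norm T u ≤ L0Norm T u := by
  have hS : MeasurableSet {t | u t ≠ 0} := (hu (measurableSet_singleton 0)).compl
  have e : L0Norm T u = ∫ t in Icc (0:ℝ) T, {t | u t ≠ 0}.indicator (fun _ => (1:ℝ)) t := by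
    rw [integral_indicator_const _ hS, smul_eq_mul, mul_one, Measure.real,
      Measure.restrict_apply hS, inter_comm]
    rfl
  rw [e]
  refine setIntegral_mono_on ((u_memLp hu hb).integrable (by norm_num)).abs
    ((integrable_const (1:ℝ)).indicator hS) measurableSet_Icc fun t ht => ?_
  by_cases h : u t = 0
  · simp [h]
  · rw [indicator_of_mem (by exact h)]
    exact hb t ht

/-- Bang-off-bang replacement. -/
theorem bang (n : ℕ) (T : ℝ) (A : Matrix (Fin n) (Fin n) ℝ) (B : Fin n → ℝ)
    {u : ℝ → ℝ} (hu : Measurable u) (hb : MagBdd T u) :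
    ∃ v, Measurable v ∧ MagBdd T v ∧ stateInt n T A B v = stateInt n T A B u ∧
      L0Norm T v ≤ L1Norm T u := by
  let sg : ℝ → ℝ := fun t => if 0 ≤ u t then 1 else -1
  have hsg : Measurable sg :=
    Measurable.ite (measurableSet_le measurable_const hu) measurable_const measurable_const
  have hsb : ∀ t, |sg t| = 1 := by
    intro t; simp only [sg]; split_ifs <;> simp
  have hsu : ∀ t, |u t| * sg t = u t := by
    intro t; simp only [sg]; split_ifs with h
    · rw [abs_of_nonneg h, mul_one]
    · rw [abs_of_neg (not_le.1 h)]; ring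
  let g : Option (Fin n) → ℝ → ℝ := fun o t =>
    o.elim 1 (fun i => sg t * (NormedSpace.exp ((-t) • A)).mulVec B i)
  have hg : ∀ o, MemLp (g o) 2 (volume.restrict (Icc (0:ℝ) T)) := by
    rintro (_ | i)
    · exact memLp_const 1
    · refine (g_memLp n T A B i).of_le
        (hsg.aestronglyMeasurable.mul (g_memLp n T A B i).1) ?_
      refine Filter.Eventually.of_forall fun t => ?_
      simp only [g, Option.elim]
      rw [norm_mul, Real.norm_eq_abs, hsb, one_mul]
  obtain ⟨E, hE, hEi⟩ := lyap T g hg (fun t => |u t|) hu.abs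
    (fun t ht => ⟨abs_nonneg _, hb t ht⟩)
  let v : ℝ → ℝ := fun t => E.indicator (fun _ => (1:ℝ)) t * sg t
  have hv : Measurable v := (measurable_const.indicator hE).mul hsg
  have hvb : MagBdd T v := by
    intro t _
    simp only [v]
    rw [abs_mul, hsb, mul_one]
    by_cases h : t ∈ E <;> simp [h]
  refine ⟨v, hv, hvb, ?_, ?_⟩
  · funext i
    rw [stateInt_apply n T A B hv hvb, stateInt_apply n T A B hu hb]
    have := hEi (some i)
    simp only [g, Option.elim, ← mul_assoc, hsu] at this
    exact this
  · have := hEi none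
    simp only [g, Option.elim, mul_one] at this
    unfold L1Norm L0Norm
    rw [← this, integral_indicator_const _ hE, smul_eq_mul, mul_one, Measure.real,
      Measure.restrict_apply hE]
    refine ENNReal.toReal_mono ?_ (measure_mono ?_)
    · exact ((measure_mono inter_subset_right).trans_lt measure_Icc_lt_top).ne
    · rintro t ⟨h1, h2⟩
      refine ⟨?_, h1⟩
      by_contra h
      exact h2 (by simp [v, h])

theorem ReachL1_eq_sublevel (n : ℕ) (T : ℝ) (hT : 0 < T)
    (A : Matrix (Fin n) (Fin n) ℝ) (B : Fin n → ℝ)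
    (hctrb : (ctrbMatrix n A B).rank = n) (hA : A.det ≠ 0) :
    ∀ α ∈ Icc (0:ℝ) T,
      ReachL1 n T A B α = {ξ ∈ Reach n T A B | V0 n T A B ξ ≤ α} := by
  intro α _
  ext ξ
  constructor
  · rintro ⟨u, hu, hb, hl, rfl⟩
    refine ⟨⟨u, hu, hb, rfl⟩, ?_⟩
    obtain ⟨v, hv, hvb, hvs, hv0⟩ := bang n T A B hu.neg (MagBdd_neg hb)
    have e : L1Norm T (-u) = L1Norm T u := by simp [L1Norm]
    have hle : V0 n T A B (stateInt n T A B u) ≤ L0Norm T v := by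
      refine csInf_le ⟨0, ?_⟩ ⟨v, ⟨hv, hvb, hvs.trans (stateInt_neg n T A B u)⟩, rfl⟩
      rintro c ⟨w, -, rfl⟩
      exact ENNReal.toReal_nonneg
    exact hle.trans (hv0.trans (e.le.trans hl))
  · rintro ⟨⟨u, hu, hb, rfl⟩, hV⟩
    obtain ⟨v, hv, hvb, hvl, hvs⟩ := l1_closed T _ (g_memLp n T A B)
      (stateInt n T A B u) α (by
        intro ε hε
        have hne : {c | ∃ w, Admissible n T A B (stateInt n T A B u) w ∧
            c = L0Norm T w}.Nonempty :=
          ⟨_, fun t => -u t, ⟨hu.neg, MagBdd_neg hb, stateInt_neg n T A B u⟩, rfl⟩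
        obtain ⟨c, ⟨w, ⟨hw, hwb, hws⟩, rfl⟩, hc⟩ :=
          exists_lt_of_csInf_lt hne (lt_of_le_of_lt hV (lt_add_of_pos_right α hε))
        refine ⟨fun t => -w t, hw.neg, MagBdd_neg hwb, ?_, fun i => ?_⟩
        · have e : L1Norm T (fun t => -w t) = L1Norm T w := by simp [L1Norm]
          rw [e]
          exact (L1_le_L0 hw hwb).trans hc.le
        · have := stateInt_apply n T A B hw.neg (MagBdd_neg hwb) i
          refine this.symm.trans ?_
          have h2 := stateInt_neg n T A B w
          rw [hws, neg_neg] at h2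
          exact congrFun h2 i)
    refine ⟨v, hv, hvb, hvl, ?_⟩
    funext i
    rw [stateInt_apply n T A B hv hvb, hvs]
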